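/- arXiv:2604.14686 — 4 statements merged into one kernel-verified Lean document; each statement's English description precedes it below -/
import Mathlib

section
/- For every odd integer n ≥ 3, the local energy of the cycle graph C_n satisfies e(C_n) = 2n. -/
open SimpleGraph Matrix Finset

noncomputable section

/-- The adjacency matrix of a simple graph over `ℝ` is Hermitian. -/
lemma adjMatrix_isHermitian {V : Type*} [Fintype V] (G : SimpleGraph V)
    [DecidableRel G.Adj] : (G.adjMatrix ℝ).IsHermitian := by
  rw [Matrix.IsHermitian, Matrix.conjTranspose_eq_transpose_of_trivial]
  exact G.isSymm_adjMatrix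

/-- The energy of a finite simple graph: the sum of the absolute values of the
eigenvalues of its adjacency matrix. -/
def graphEnergy {V : Type*} [Fintype V] [DecidableEq V] (G : SimpleGraph V) : ℝ :=
  letI := Classical.decRel G.Adj
  ∑ i, |(adjMatrix_isHermitian G).eigenvalues i|

/-- The local energy of `G` at a vertex `v`: the energy of `G` minus the energy of the
induced subgraph obtained by deleting `v`. -/
def localEnergyAt {V : Type*} [Fintype V] [DecidableEq V] (G : SimpleGraph V) (v : V) : ℝ :=
  graphEnergy G - graphEnergy (G.induce {u | u ≠ v})

/-- The local energy of `G`: the sum of the local energies at all vertices. -/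
def localEnergy {V : Type*} [Fintype V] [DecidableEq V] (G : SimpleGraph V) : ℝ :=
  ∑ v, localEnergyAt G v

end

lemma nbr_sum {R : Type*} [NonAssocSemiring R] (N : ℕ) [DecidableRel (cycleGraph (N + 3)).Adj]
    (f : Fin (N + 3) → R) (u : Fin (N + 3)) :
    ∑ w, (cycleGraph (N + 3)).adjMatrix R u w * f w = f (u - 1) + f (u + 1) := by
  have hne : u - 1 ≠ u + 1 := by
    intro h
    have h2 : (1 : Fin (N + 3)) + 1 = 0 := by
      have := sub_eq_iff_eq_add.mp h
      rw [add_assoc] at this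
      exact left_eq_add.mp this
    have := congrArg Fin.val h2
    rw [Fin.val_add] at this
    simp at this
    rw [Nat.mod_eq_of_lt (by omega)] at this
    omega
  have h : ∀ w, (cycleGraph (N + 3)).Adj u w ↔ w ∈ ({u - 1, u + 1} : Finset (Fin (N + 3))) := by
    intro w
    have := (cycleGraph_adj (n := N + 1) (u := u) (v := w))
    rw [this, Finset.mem_insert, Finset.mem_singleton]
    constructor
    · rintro (h | h)
      · left; rw [← h]; abel
      · right; rw [← h]; abel
    · rintro (h | h)
      · left; rw [h]; abel
      · right; rw [h]; abel
  simp_rw [adjMatrix_apply, ite_mul, one_mul, zero_mul, h]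
  rw [Finset.sum_ite_mem, Finset.univ_inter, Finset.sum_pair hne]

lemma sum_abs_of_roots {V ι : Type*} [Fintype V] [DecidableEq V] [Fintype ι]
    {A : Matrix V V ℝ} (hA : A.IsHermitian) (d : ι → ℝ)
    (h : A.charpoly.roots = Finset.univ.val.map d) :
    ∑ i, |hA.eigenvalues i| = ∑ i, |d i| := by
  have h1 := hA.roots_charpoly_eq_eigenvalues
  rw [h] at h1
  have h2 := congrArg (fun s => (s.map (fun x : ℝ => |x|)).sum) h1
  simp only [Multiset.map_map] at h2
  exact h2.symm

lemma sum_abs_of_conj {V : Type*} [Fintype V] [DecidableEq V]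
    {A : Matrix V V ℝ} (hA : A.IsHermitian) (d : V → ℝ) (P : Matrix V V ℂ)
    (hP : IsUnit P.det)
    (h : A.map (algebraMap ℝ ℂ) * P = P * diagonal (fun i => algebraMap ℝ ℂ (d i))) :
    ∑ i, |hA.eigenvalues i| = ∑ i, |d i| := by
  apply sum_abs_of_roots
  have h1 : A.map (algebraMap ℝ ℂ) = P * diagonal (fun i => algebraMap ℝ ℂ (d i)) * P⁻¹ := by
    rw [← h, Matrix.mul_assoc, Matrix.mul_nonsing_inv _ hP, Matrix.mul_one]
  have h2 : (A.map (algebraMap ℝ ℂ)).charpoly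
      = (diagonal (fun i => algebraMap ℝ ℂ (d i))).charpoly := by
    rw [h1, Matrix.mul_assoc, Matrix.charpoly_mul_comm, Matrix.mul_assoc,
      Matrix.nonsing_inv_mul _ hP, Matrix.mul_one]
  have h3 : A.charpoly = (diagonal d).charpoly := by
    apply Polynomial.map_injective (algebraMap ℝ ℂ) (algebraMap ℝ ℂ).injective
    rw [← Matrix.charpoly_map, ← Matrix.charpoly_map, h2, Matrix.diagonal_map (map_zero _)]
  rw [h3, Matrix.charpoly_diagonal]
  have h4 := Polynomial.roots_multiset_prod_X_sub_C (Finset.univ.val.map d)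
  rw [Multiset.map_map] at h4
  exact h4

lemma sum_abs_of_inj {V ι : Type*} [Fintype V] [DecidableEq V] [Fintype ι]
    {A : Matrix V V ℝ} (hA : A.IsHermitian) (d : ι → ℝ) (hd : Function.Injective d)
    (hc : Fintype.card ι = Fintype.card V) (x : ι → V → ℝ) (hx : ∀ i, x i ≠ 0)
    (h : ∀ i, A *ᵥ x i = d i • x i) :
    ∑ i, |hA.eigenvalues i| = ∑ i, |d i| := by
  apply sum_abs_of_roots
  symm
  apply Multiset.eq_of_le_of_card_le
  · rw [Multiset.le_iff_subset (Multiset.Nodup.map hd Finset.univ.nodup)]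
    intro a ha
    obtain ⟨i, -, rfl⟩ := Multiset.mem_map.mp ha
    rw [Polynomial.mem_roots (Matrix.charpoly_monic A).ne_zero, Polynomial.IsRoot,
      Matrix.eval_charpoly]
    apply Matrix.exists_mulVec_eq_zero_iff.mp
    refine ⟨x i, hx i, ?_⟩
    rw [Matrix.sub_mulVec, h i]
    ext v
    simp [Matrix.scalar_apply, Matrix.mulVec_diagonal]
  · refine (Polynomial.card_roots' _).trans ?_
    rw [Matrix.charpoly_natDegree_eq_dim, ← hc]
    simp

lemma energy_cycle (k : ℕ) : graphEnergy (cycleGraph (2 * k + 3)) =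
    ∑ j : Fin (2 * k + 3), |2 * Real.cos (Real.pi * (j : ℕ) / (2 * k + 3 : ℕ))| := by
  letI := Classical.decRel (cycleGraph (2 * k + 3)).Adj
  have hn0 : ((2 * k + 3 : ℕ) : ℂ) ≠ 0 := Nat.cast_ne_zero.mpr (by omega)
  set ζ : ℂ := Complex.exp (2 * Real.pi * Complex.I * ((k + 2 : ℕ) / (2 * k + 3 : ℕ))) with hζ
  have hprim : IsPrimitiveRoot ζ (2 * k + 3) := by
    apply Complex.isPrimitiveRoot_exp_of_coprime _ _ (by omega)
    have : Nat.Coprime (2 * (k + 2)) (2 * k + 3) := by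
      rw [show 2 * (k + 2) = 2 * k + 3 + 1 by ring]
      simp
    exact this.coprime_mul_left
  have hζ0 : ζ ≠ 0 := Complex.exp_ne_zero _
  let d : Fin (2 * k + 3) → ℝ := fun j =>
    2 * Real.cos (Real.pi * (j : ℕ) / (2 * k + 3 : ℕ) + (j : ℕ) * Real.pi)
  have hdz : ∀ j : Fin (2 * k + 3), (d j : ℂ) = (ζ ^ (j : ℕ))⁻¹ + ζ ^ (j : ℕ) := by
    intro j
    simp only [d, hζ]
    rw [← Complex.exp_nat_mul, ← Complex.exp_neg]
    push_cast
    rw [Complex.two_cos, add_comm]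
    push_cast at hn0
    congr 2 <;> (field_simp; ring)
  have key := sum_abs_of_conj (adjMatrix_isHermitian (cycleGraph (2 * k + 3))) d
    (vandermonde (fun j : Fin (2 * k + 3) => ζ ^ (j : ℕ)))ᵀ ?_ ?_
  · refine key.trans (Finset.sum_congr rfl fun j _ => ?_)
    simp only [d]
    rw [Real.cos_add_nat_mul_pi, abs_mul, abs_mul, abs_mul, abs_pow]
    simp
  · rw [Matrix.det_transpose, isUnit_iff_ne_zero, Matrix.det_vandermonde_ne_zero_iff]
    intro a b hab
    exact Fin.ext (hprim.pow_inj a.2 b.2 hab)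
  · ext u j
    rw [Matrix.mul_diagonal, Matrix.mul_apply]
    set z := ζ ^ (j : ℕ) with hz
    have hz0 : z ≠ 0 := pow_ne_zero _ hζ0
    have hzn : z ^ (2 * k + 3) = 1 := by
      rw [hz, ← pow_mul, mul_comm, pow_mul, hprim.pow_eq_one, one_pow]
    have hs : ∀ w : Fin (2 * k + 3), z ^ ((w + 1 : Fin (2 * k + 3)) : ℕ) = z ^ (w : ℕ) * z := by
      intro w
      rw [Fin.val_add, ← pow_succ, ← pow_eq_pow_mod _ hzn]
      rfl
    have h1 := nbr_sum (2 * k) (fun w : Fin (2 * k + 3) => z ^ (w : ℕ)) u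
    have h2 := hs (u - 1)
    rw [sub_add_cancel] at h2
    have h3 : ∀ w, ((cycleGraph (2 * k + 3)).adjMatrix ℝ).map (algebraMap ℝ ℂ) u w
        = (cycleGraph (2 * k + 3)).adjMatrix ℂ u w := by
      intro w
      simp [adjMatrix_apply, apply_ite]
    simp only [h3, Matrix.transpose_apply, vandermonde_apply]
    refine h1.trans ?_
    rw [Complex.coe_algebraMap, hdz j, ← hz, hs u, h2]
    field_simp

lemma energy_path (N : ℕ) (v : Fin (N + 3)) :
    graphEnergy ((cycleGraph (N + 3)).induce {u | u ≠ v}) =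
    ∑ j : Fin (N + 2), |2 * Real.cos (Real.pi * (j.succ : ℕ) / (N + 3 : ℕ))| := by
  letI := Classical.decRel ((cycleGraph (N + 3)).induce {u | u ≠ v}).Adj
  letI := Classical.decRel (cycleGraph (N + 3)).Adj
  have hn0 : ((N + 3 : ℕ) : ℝ) ≠ 0 := by positivity
  have hnpos : (0 : ℝ) < ((N + 3 : ℕ) : ℝ) := by positivity
  have hrange : ∀ j : Fin (N + 2), 0 < Real.pi * (j.succ : ℕ) / (N + 3 : ℕ) ∧
      Real.pi * (j.succ : ℕ) / (N + 3 : ℕ) < Real.pi := by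
    intro j
    have hj0 : (0 : ℝ) < (j.succ : ℕ) := by exact_mod_cast Fin.succ_pos j
    have hj1 : ((j.succ : ℕ) : ℝ) < (N + 3 : ℕ) := by exact_mod_cast j.succ.2
    refine ⟨by have := Real.pi_pos; positivity, ?_⟩
    rw [div_lt_iff₀ hnpos]
    exact mul_lt_mul_of_pos_left hj1 Real.pi_pos
  let θ : Fin (N + 2) → ℝ := fun j => Real.pi * (j.succ : ℕ) / (N + 3 : ℕ)
  let g : Fin (N + 2) → Fin (N + 3) → ℝ := fun j u => Real.sin (θ j * ((u - v : Fin (N + 3)) : ℕ))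
  have gv : ∀ j, g j v = 0 := by intro j; simp [g]
  refine sum_abs_of_inj (adjMatrix_isHermitian _) (fun j => 2 * Real.cos (θ j)) ?_ ?_
    (fun j u => g j u.1) ?_ ?_
  · intro a b hab
    have h1 : Real.cos (θ a) = Real.cos (θ b) := by simpa using hab
    have h2 := Real.injOn_cos ⟨(hrange a).1.le, (hrange a).2.le⟩ ⟨(hrange b).1.le, (hrange b).2.le⟩ h1
    replace h2 : Real.pi * (a.succ : ℕ) / (N + 3 : ℕ) = Real.pi * (b.succ : ℕ) / (N + 3 : ℕ) := h2
    rw [div_left_inj' hn0, mul_right_inj' Real.pi_ne_zero] at h2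
    have h3 : (a.succ : ℕ) = b.succ := by exact_mod_cast h2
    exact Fin.succ_injective _ (Fin.ext h3)
  · have := Fintype.card_subtype_compl (fun w : Fin (N + 3) => w = v)
    simp only [Fintype.card_subtype_eq, Fintype.card_fin] at this
    rw [Fintype.card_fin]
    exact this.symm.trans (Fintype.card_congr (Equiv.refl _))
  · intro j h
    have h1 := congrFun h ⟨v + 1, by simp⟩
    have h2 : Real.sin (θ j) = 0 := by simpa [g] using h1
    exact (Real.sin_pos_of_pos_of_lt_pi (hrange j).1 (hrange j).2).ne' h2
  · intro j
    ext ⟨u, hu⟩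
    have hu' : u ≠ v := hu
    have h1 := nbr_sum N (g j) u
    have h2 : ∑ w, (cycleGraph (N + 3)).adjMatrix ℝ u w * g j w =
        ∑ w : {w | w ≠ v}, (cycleGraph (N + 3)).adjMatrix ℝ u w * g j w := by
      rw [← Finset.sum_subtype (Finset.univ.erase v) (p := fun w => w ∈ {w | w ≠ v}) (by simp)
        (fun w => (cycleGraph (N + 3)).adjMatrix ℝ u w * g j w)]
      exact (Finset.sum_erase _ (by rw [gv, mul_zero])).symm
    have h3 : (((cycleGraph (N + 3)).induce {u | u ≠ v}).adjMatrix ℝ *ᵥ fun u => g j u.1) ⟨u, hu⟩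
        = ∑ w : {w | w ≠ v}, (cycleGraph (N + 3)).adjMatrix ℝ u w * g j w := by
      simp only [Matrix.mulVec, dotProduct]
      refine Finset.sum_congr rfl fun w _ => ?_
      simp [adjMatrix_apply]
    rw [h3, ← h2, h1]
    have e1 : g j (u + 1) = Real.sin (θ j * ((u - v : Fin (N + 3)) : ℕ) + θ j) := by
      simp only [g]
      rw [show u + 1 - v = (u - v) + 1 by abel, Fin.val_add_one]
      split_ifs with hl
      · rw [hl, Fin.val_last, ← mul_add_one]
        have : θ j * (((N + 2 : ℕ) : ℝ) + 1) = (j.succ : ℕ) * Real.pi := by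
          simp only [θ]
          push_cast at hn0 ⊢
          field_simp
          ring
        rw [this, Real.sin_nat_mul_pi]; simp
      · push_cast; rw [mul_add_one]
    have e2 : g j (u - 1) = Real.sin (θ j * ((u - v : Fin (N + 3)) : ℕ) - θ j) := by
      simp only [g]
      have hne : u - v ≠ 0 := sub_ne_zero.mpr hu'
      rw [show u - 1 - v = (u - v) - 1 by abel, Fin.val_sub_one_of_ne_zero hne,
        Nat.cast_sub (Nat.one_le_iff_ne_zero.mpr (Fin.val_ne_zero_iff.mpr hne))]
      push_cast; rw [mul_sub_one]
    rw [e1, e2, Real.sin_add, Real.sin_sub]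
    simp only [Pi.smul_apply, smul_eq_mul, g]
    ring

/-- `e(C_n) = 2n` for every odd `n ≥ 3`. -/
theorem localEnergy_cycleGraph_odd (n : ℕ) (hn : 3 ≤ n) (hodd : Odd n) :
    localEnergy (cycleGraph n) = 2 * n := by
  obtain ⟨m, rfl⟩ := hodd
  obtain ⟨k, rfl⟩ : ∃ k, m = k + 1 := ⟨m - 1, by omega⟩
  have h : ∀ v : Fin (2 * k + 3), localEnergyAt (cycleGraph (2 * k + 3)) v = 2 := by
    intro v
    rw [localEnergyAt, energy_cycle, energy_path, Fin.sum_univ_succ]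
    simp
  change localEnergy (cycleGraph (2 * k + 3)) = 2 * ((2 * k + 3 : ℕ) : ℝ)
  rw [localEnergy, Finset.sum_congr rfl fun v _ => h v]
  simp [mul_comm]
end

section
/- For any finite simple graph G and any vertex v of G, the local energy of G at v satisfies E_G(v) ≤ 2√(d(v)), where d(v) is the degree of v in G. -/
open SimpleGraph Matrix Finset

lemma aux_spectral {n : Type*} [Fintype n] [DecidableEq n] {A : Matrix n n ℝ}
    (hA : A.IsHermitian) : ∃ U : Matrix n n ℝ, U * Uᵀ = 1 ∧ Uᵀ * U = 1 ∧
      A = U * diagonal hA.eigenvalues * Uᵀ := by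
  refine ⟨hA.eigenvectorUnitary, ?_, ?_, ?_⟩
  · have := Unitary.mul_star_self_of_mem hA.eigenvectorUnitary.2
    rwa [star_eq_conjTranspose, conjTranspose_eq_transpose_of_trivial] at this
  · have := Unitary.star_mul_self_of_mem hA.eigenvectorUnitary.2
    rwa [star_eq_conjTranspose, conjTranspose_eq_transpose_of_trivial] at this
  · have := hA.spectral_theorem
    rw [Unitary.conjStarAlgAut_apply, star_eq_conjTranspose,
      conjTranspose_eq_transpose_of_trivial] at this
    exact this

lemma aux_sign {n : Type*} [Fintype n] [DecidableEq n] {A : Matrix n n ℝ}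
    (hA : A.IsHermitian) : ∃ S : Matrix n n ℝ, S * Sᵀ = 1 ∧ Sᵀ * S = 1 ∧
      trace (S * A) = ∑ i, |hA.eigenvalues i| := by
  obtain ⟨U, h1, h2, h3⟩ := aux_spectral hA
  set s : n → ℝ := fun i => if 0 ≤ hA.eigenvalues i then 1 else -1 with hs
  have hss : diagonal s * diagonal s = 1 := by
    rw [diagonal_mul_diagonal, ← diagonal_one]
    congr 1
    funext i
    simp only [hs]
    split_ifs <;> norm_num
  have hT : (U * diagonal s * Uᵀ)ᵀ = U * diagonal s * Uᵀ := by
    simp [transpose_mul, Matrix.mul_assoc]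
  have hsq : (U * diagonal s * Uᵀ) * (U * diagonal s * Uᵀ) = 1 := by
    calc (U * diagonal s * Uᵀ) * (U * diagonal s * Uᵀ)
        = U * diagonal s * (Uᵀ * U) * diagonal s * Uᵀ := by simp only [Matrix.mul_assoc]
      _ = U * (diagonal s * diagonal s) * Uᵀ := by rw [h2]; simp only [Matrix.mul_assoc, Matrix.one_mul]
      _ = 1 := by rw [hss, Matrix.mul_one, h1]
  refine ⟨U * diagonal s * Uᵀ, by rw [hT, hsq], by rw [hT, hsq], ?_⟩
  have : (U * diagonal s * Uᵀ) * A = U * (diagonal s * diagonal hA.eigenvalues * Uᵀ) := by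
    calc (U * diagonal s * Uᵀ) * A
        = (U * diagonal s * Uᵀ) * (U * diagonal hA.eigenvalues * Uᵀ) := by rw [← h3]
      _ = U * diagonal s * (Uᵀ * U) * diagonal hA.eigenvalues * Uᵀ := by
          simp only [Matrix.mul_assoc]
      _ = _ := by rw [h2]; simp only [Matrix.mul_assoc, Matrix.one_mul]
  rw [this, trace_mul_comm, Matrix.mul_assoc, h2, Matrix.mul_one, diagonal_mul_diagonal,
    trace_diagonal]
  refine Finset.sum_congr rfl fun i _ => ?_
  simp only [hs]
  split_ifs with h
  · rw [abs_of_nonneg h, one_mul]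
  · rw [abs_of_neg (not_le.mp h)]; ring

lemma aux_trace_le {n : Type*} [Fintype n] [DecidableEq n] {B : Matrix n n ℝ}
    (hB : B.IsHermitian) (T : Matrix n n ℝ) (hT : ∀ x : n → ℝ, |x ⬝ᵥ T *ᵥ x| ≤ x ⬝ᵥ x) :
    trace (T * B) ≤ ∑ i, |hB.eigenvalues i| := by
  obtain ⟨U, h1, h2, h3⟩ := aux_spectral hB
  have : trace (T * B) = trace ((Uᵀ * (T * U)) * diagonal hB.eigenvalues) := by
    calc trace (T * B) = trace (T * (U * diagonal hB.eigenvalues * Uᵀ)) := by rw [← h3]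
      _ = trace ((T * U * diagonal hB.eigenvalues) * Uᵀ) := by simp only [Matrix.mul_assoc]
      _ = _ := by rw [trace_mul_comm]; simp only [Matrix.mul_assoc]
  rw [this, trace]
  refine Finset.sum_le_sum fun i _ => ?_
  rw [diag_apply, mul_diagonal]
  have hu : (fun k => U k i) ⬝ᵥ (fun k => U k i) = 1 := by
    have := congrFun (congrFun h2 i) i
    simpa [Matrix.mul_apply, dotProduct] using this
  have he : (Uᵀ * (T * U)) i i = (fun k => U k i) ⬝ᵥ T *ᵥ (fun k => U k i) := by
    simp [Matrix.mul_apply, dotProduct, mulVec]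
  have := hT (fun k => U k i)
  rw [← he, hu] at this
  calc _ ≤ |(Uᵀ * (T * U)) i i * hB.eigenvalues i| := le_abs_self _
    _ = |(Uᵀ * (T * U)) i i| * |hB.eigenvalues i| := abs_mul _ _
    _ ≤ 1 * |hB.eigenvalues i| := by gcongr
    _ = _ := one_mul _

lemma aux_contract {n : Type*} [Fintype n] [DecidableEq n] {S : Matrix n n ℝ}
    (h : Sᵀ * S = 1) (x : n → ℝ) : |x ⬝ᵥ S *ᵥ x| ≤ x ⬝ᵥ x := by
  have h1 : (S *ᵥ x) ⬝ᵥ (S *ᵥ x) = x ⬝ᵥ x := by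
    rw [dotProduct_mulVec, vecMul_mulVec, dotProduct_comm, h, vecMul_one]
  have h2 : 0 ≤ (x - S *ᵥ x) ⬝ᵥ (x - S *ᵥ x) :=
    Finset.sum_nonneg fun i _ => mul_self_nonneg _
  have h3 : 0 ≤ (x + S *ᵥ x) ⬝ᵥ (x + S *ᵥ x) :=
    Finset.sum_nonneg fun i _ => mul_self_nonneg _
  simp only [sub_dotProduct, dotProduct_sub, add_dotProduct, dotProduct_add, h1,
    dotProduct_comm (S *ᵥ x) x] at h2 h3
  rw [abs_le]
  constructor <;> linarith

lemma aux_sum_split {V : Type*} [Fintype V] [DecidableEq V] (v : V)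
    [Fintype ↑{u : V | u ≠ v}] (f : V → ℝ) :
    ∑ i, f i = f v + ∑ i : ↑{u : V | u ≠ v}, f i := by
  rw [← Finset.add_sum_erase univ f (mem_univ v)]
  congr 1
  exact Finset.sum_subtype (univ.erase v) (p := fun u => u ∈ {u : V | u ≠ v}) (by simp) f

lemma aux_cs {V : Type*} [Fintype V] (f g : V → ℝ) (d : ℝ) (hf : ∑ i, f i * f i = 1)
    (hg : ∑ i, g i * g i = d) : ∑ i, f i * g i ≤ Real.sqrt d := by
  apply Real.le_sqrt_of_sq_le
  have := Finset.sum_mul_sq_le_sq_mul_sq Finset.univ f g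
  simp only [pow_two] at this ⊢
  rw [hf, hg, one_mul] at this
  exact this

/-- `E_G(v) ≤ 2√(d(v))` for every vertex `v`. -/
theorem localEnergyAt_le {V : Type*} [Fintype V] [DecidableEq V] (G : SimpleGraph V)
    [DecidableRel G.Adj] (v : V) :
    localEnergyAt G v ≤ 2 * Real.sqrt (G.degree v) := by
  have key : ∀ (inst : DecidableRel G.Adj) (inst2 : DecidableRel (G.induce {u | u ≠ v}).Adj),
      ∑ i, |(adjMatrix_isHermitian G).eigenvalues i| -
        ∑ i, |(adjMatrix_isHermitian (G.induce {u | u ≠ v})).eigenvalues i|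
        ≤ 2 * Real.sqrt (G.degree v) := by
    intro inst inst2
    obtain ⟨S, h1, h2, h3⟩ := aux_sign (adjMatrix_isHermitian G)
    have h4 := aux_trace_le (adjMatrix_isHermitian (G.induce {u | u ≠ v}))
      (S.submatrix Subtype.val Subtype.val) (by
        intro x
        obtain ⟨y, hy0, hy⟩ : ∃ y : V → ℝ, y v = 0 ∧ ∀ i : ↑{u : V | u ≠ v}, y i = x i :=
          ⟨fun u => if h : u ≠ v then x ⟨u, h⟩ else 0, by simp, fun i => dif_pos i.2⟩
        have := aux_contract h2 y
        simp only [dotProduct, mulVec] at this ⊢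
        have e1 : ∀ i, ∑ j, S i j * y j = ∑ j : ↑{u : V | u ≠ v}, S i j * x j := fun i => by
          rw [aux_sum_split v, hy0, mul_zero, zero_add]
          simp only [hy]
        simp only [e1] at this
        rw [aux_sum_split v (fun i => y i * y i), aux_sum_split v, hy0, zero_mul, zero_mul,
          zero_add, zero_add] at this
        simp only [hy] at this
        exact this)
    rw [← h3]
    set A := G.adjMatrix ℝ with hA
    have hAs : ∀ i j, A i j = A j i := fun i j => by simp [hA, adjMatrix_apply, G.adj_comm]
    have hAv : A v v = 0 := by simp [hA]
    have hd : ∑ i, A v i * A v i = G.degree v := by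
      have : ∀ i, A v i * A v i = if G.Adj v i then 1 else 0 := fun i => by
        simp only [hA, adjMatrix_apply]
        split_ifs <;> norm_num
      simp only [this]
      rw [← card_neighborFinset_eq_degree, neighborFinset_eq_filter, Finset.sum_boole]
    have hp := aux_cs (fun i => S v i) (fun i => A v i) _
      (by simpa [Matrix.mul_apply] using congrFun (congrFun h1 v) v) hd
    have hq := aux_cs (fun i => S i v) (fun i => A v i) _
      (by simpa [Matrix.mul_apply] using congrFun (congrFun h2 v) v) hd
    have htr : trace (S * A) = ∑ i, S v i * A v i + ∑ i, S i v * A v i +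
        trace (S.submatrix Subtype.val Subtype.val * (G.induce {u | u ≠ v}).adjMatrix ℝ) := by
      simp only [trace, diag_apply, Matrix.mul_apply]
      rw [aux_sum_split v, aux_sum_split v (fun i => S i v * A v i), hAv, mul_zero, zero_add,
        add_assoc, ← Finset.sum_add_distrib]
      congr 1
      · exact Finset.sum_congr rfl fun i _ => by rw [hAs]
      · refine Finset.sum_congr rfl fun i _ => ?_
        rw [aux_sum_split v]
        congr 1
        refine Finset.sum_congr rfl fun j _ => ?_
        simp [hA, adjMatrix_apply]
    linarith
  have := key (Classical.decRel _) (Classical.decRel _)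
  unfold localEnergyAt graphEnergy
  convert this
end

section
/- For every odd integer n ≥ 3, the complete graph K_n and the cycle graph C_n are locally equienergetic, i.e., e(K_n) = e(C_n). -/
open SimpleGraph Matrix Finset

/-- `graphEnergy` may be computed with any decidability instance. -/
lemma graphEnergy_eq {V : Type*} [Fintype V] [DecidableEq V] (G : SimpleGraph V)
    [inst : DecidableRel G.Adj] :
    graphEnergy G = ∑ i, |(adjMatrix_isHermitian G).eigenvalues i| := by
  have h : inst = Classical.decRel G.Adj := Subsingleton.elim _ _
  subst h
  rfl

/-- The energy of a complete graph. -/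
lemma graphEnergy_top {V : Type*} [Fintype V] [DecidableEq V] (hV : 1 ≤ Fintype.card V) :
    graphEnergy (⊤ : SimpleGraph V) = 2 * ((Fintype.card V : ℝ) - 1) := by
  rw [graphEnergy_eq]
  set hA := adjMatrix_isHermitian (⊤ : SimpleGraph V) with hAdef
  set m : ℝ := (Fintype.card V : ℝ) with hm
  have hm1 : (1 : ℝ) ≤ m := by
    rw [hm]
    exact_mod_cast hV
  have htr : ∑ i, hA.eigenvalues i = 0 := by
    have h := hA.trace_eq_sum_eigenvalues
    rw [trace_adjMatrix] at h
    simpa using h.symm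
  have hev : ∀ i, hA.eigenvalues i = -1 ∨ hA.eigenvalues i = m - 1 := by
    intro i
    have h1 := hA.mulVec_eigenvectorBasis i
    set l := hA.eigenvalues i
    set x : V → ℝ := ⇑(hA.eigenvectorBasis i) with hx
    have hx0 : ∃ u, x u ≠ 0 := by
      by_contra hcon
      push Not at hcon
      have h0 : hA.eigenvectorBasis i = 0 := by
        ext u
        exact hcon u
      exact hA.eigenvectorBasis.toBasis.ne_zero i (by simpa using h0)
    have h2 : ∀ u, (∑ w, x w) = (l + 1) * x u := by
      intro u
      have h3 := congrFun h1 u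
      rw [adjMatrix_mulVec_apply] at h3
      have h4 : (⊤ : SimpleGraph V).neighborFinset u = univ.erase u := by
        ext w
        simp [eq_comm]
      rw [h4] at h3
      rw [← Finset.add_sum_erase _ _ (mem_univ u), h3]
      simp only [Pi.smul_apply, smul_eq_mul]
      ring
    obtain ⟨u, hu⟩ := hx0
    have h5 : m * (∑ w, x w) = (l + 1) * ∑ w, x w := by
      rw [Finset.mul_sum (s := univ) (a := l + 1), ← Finset.sum_congr rfl (fun w _ => h2 w)]
      simp [hm]
    rw [h2 u] at h5
    by_cases hl : l + 1 = 0
    · left; linarith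
    · right
      have := mul_right_cancel₀ (mul_ne_zero hl hu) h5
      linarith
  have habs : ∀ i, |hA.eigenvalues i| = (m - 2) / m * hA.eigenvalues i + 2 * (m - 1) / m := by
    intro i
    rcases hev i with h | h <;> rw [h]
    · rw [abs_neg, abs_one]; field_simp; ring
    · rw [abs_of_nonneg (by linarith)]; field_simp; ring
  rw [Finset.sum_congr rfl (fun i _ => habs i), Finset.sum_add_distrib, ← Finset.mul_sum, htr]
  simp only [mul_zero, zero_add, sum_const, card_univ, nsmul_eq_mul]
  rw [← hm]
  field_simp

/-- Energy from a factorisation of the characteristic polynomial. -/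
lemma graphEnergy_of_charpoly {V : Type*} [Fintype V] [DecidableEq V] (G : SimpleGraph V)
    [DecidableRel G.Adj] (d : V → ℝ)
    (h : (G.adjMatrix ℝ).charpoly = ∏ i, (Polynomial.X - Polynomial.C (d i))) :
    graphEnergy G = ∑ i, |d i| := by
  rw [graphEnergy_eq]
  have h1 := (adjMatrix_isHermitian G).roots_charpoly_eq_eigenvalues
  rw [h, Polynomial.roots_prod _ _ (Finset.prod_ne_zero_iff.mpr
    fun i _ => Polynomial.X_sub_C_ne_zero _)] at h1
  simp only [Polynomial.roots_X_sub_C, Multiset.bind_singleton] at h1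
  have h2 := congrArg (fun s : Multiset ℝ => (s.map (fun x => |x|)).sum) h1
  simp only [Multiset.map_map] at h2
  exact h2.symm

/-- Energy from pairwise distinct eigenvalues. -/
lemma graphEnergy_of_distinct {V : Type*} [Fintype V] [DecidableEq V] (G : SimpleGraph V)
    [DecidableRel G.Adj] (d : V → ℝ) (hd : Function.Injective d) (x : V → V → ℝ)
    (hx0 : ∀ k, x k ≠ 0) (hx : ∀ k, G.adjMatrix ℝ *ᵥ x k = d k • x k) :
    graphEnergy G = ∑ i, |d i| := by
  rw [graphEnergy_eq]
  set hA := adjMatrix_isHermitian G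
  have hmem : ∀ k, ∃ i, hA.eigenvalues i = d k := by
    intro k
    have h1 : d k ∈ spectrum ℝ (G.adjMatrix ℝ) := by
      rw [← Matrix.spectrum_toLin', ← Module.End.hasEigenvalue_iff_mem_spectrum]
      refine Module.End.hasEigenvalue_of_hasEigenvector (x := x k) ?_
      exact Module.End.hasEigenvector_iff.mpr
        ⟨Module.End.mem_eigenspace_iff.mpr (by simpa using hx k), hx0 k⟩
    rw [hA.spectrum_real_eq_range_eigenvalues] at h1
    exact h1
  choose σ hσ using hmem
  have hinj : Function.Injective σ := by
    intro a b hab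
    apply hd
    rw [← hσ a, ← hσ b, hab]
  have hbij := Finite.injective_iff_bijective.mp hinj
  rw [← Function.Bijective.sum_comp hbij (fun i => |hA.eigenvalues i|)]
  simp only [hσ]

lemma pow_fin_add_one {n : ℕ} (z : ℂ) (hz : z ^ (n + 3) = 1) (u : Fin (n + 3)) :
    z ^ ((u + 1 : Fin (n + 3)) : ℕ) = z ^ (u : ℕ) * z := by
  rw [Fin.val_add, ← pow_eq_pow_mod _ hz, Fin.val_one, pow_succ]

lemma sum_cycle_neighbors {n : ℕ} [DecidableRel (cycleGraph (n + 3)).Adj] {R : Type*} [Ring R]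
    (f : Fin (n + 3) → R) (u : Fin (n + 3)) :
    ((cycleGraph (n + 3)).adjMatrix R *ᵥ f) u = f (u - 1) + f (u + 1) := by
  rw [adjMatrix_mulVec_apply]
  have h : (cycleGraph (n + 3)).neighborFinset u = {u - 1, u + 1} := by
    ext w
    rw [mem_neighborFinset, ← mem_neighborSet, cycleGraph_neighborSet]
    simp
  rw [h, Finset.sum_pair]
  simp only [ne_eq, sub_eq_iff_eq_add, add_assoc u, left_eq_add]
  exact ne_of_beq_false rfl

/-- The energy of the cycle. -/
lemma graphEnergy_cycle (n : ℕ) :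
    graphEnergy (cycleGraph (n + 3)) =
      ∑ j : Fin (n + 3), |2 * Real.cos (2 * Real.pi * (j : ℕ) / ((n + 3 : ℕ) : ℝ))| := by
  classical
  set N : ℕ := n + 3 with hN
  set d : Fin N → ℝ := fun j => 2 * Real.cos (2 * Real.pi * (j : ℕ) / (N : ℝ)) with hd
  apply graphEnergy_of_charpoly
  apply Polynomial.map_injective (Complex.ofRealHom) Complex.ofReal_injective
  rw [← Matrix.charpoly_map, Polynomial.map_prod]
  simp only [Polynomial.map_sub, Polynomial.map_X, Polynomial.map_C]
  have hmap : ((cycleGraph N).adjMatrix ℝ).map (Complex.ofRealHom) = (cycleGraph N).adjMatrix ℂ := by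
    ext a b
    simp [adjMatrix_apply, apply_ite]
  rw [hmap]
  set ζ : ℂ := Complex.exp (2 * Real.pi * Complex.I / N) with hζ
  have hprim : IsPrimitiveRoot ζ N := Complex.isPrimitiveRoot_exp N (by omega)
  set F : Matrix (Fin N) (Fin N) ℂ := vandermonde (fun i : Fin N => ζ ^ (i : ℕ)) with hF
  have hdet : IsUnit F.det := by
    rw [isUnit_iff_ne_zero]
    refine det_vandermonde_ne_zero_iff.mpr ?_
    intro a b hab
    exact Fin.ext (hprim.pow_inj a.2 b.2 hab)
  have hAF : (cycleGraph N).adjMatrix ℂ * F = F * diagonal (fun j => ((d j : ℝ) : ℂ)) := by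
    ext u j
    have h1 : ((cycleGraph N).adjMatrix ℂ * F) u j
        = ((cycleGraph N).adjMatrix ℂ *ᵥ (fun w => F w j)) u := rfl
    rw [h1, sum_cycle_neighbors, mul_diagonal]
    have hFe : ∀ w : Fin N, F w j = (ζ ^ (j : ℕ)) ^ (w : ℕ) := by
      intro w
      rw [hF, vandermonde_apply, ← pow_mul, ← pow_mul, mul_comm]
    rw [hFe, hFe, hFe]
    set z := ζ ^ (j : ℕ) with hz
    have hz1 : z ^ N = 1 := by
      rw [hz, ← pow_mul, mul_comm, pow_mul, hprim.pow_eq_one, one_pow]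
    have hz0 : z ≠ 0 := by
      rw [hz]; exact pow_ne_zero _ (Complex.exp_ne_zero _)
    have hdz : ((d j : ℝ) : ℂ) = z + z⁻¹ := by
      rw [hz, hζ, ← Complex.exp_nat_mul, ← Complex.exp_neg, hd]
      push_cast
      rw [Complex.two_cos]
      congr 2 <;> ring
    have e1 := pow_fin_add_one z hz1 u
    have e2 := pow_fin_add_one z hz1 (u - 1)
    rw [sub_add_cancel] at e2
    rw [e1, hdz, e2]
    field_simp
    try ring
  have hconj : (cycleGraph N).adjMatrix ℂ = F * diagonal (fun j => ((d j : ℝ) : ℂ)) * F⁻¹ := by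
    rw [← hAF, Matrix.mul_assoc, Matrix.mul_nonsing_inv _ hdet, Matrix.mul_one]
  rw [hconj, Matrix.charpoly_mul_comm, ← Matrix.mul_assoc, Matrix.nonsing_inv_mul _ hdet,
    Matrix.one_mul, Matrix.charpoly_diagonal]
  rfl

/-- The energy of the cycle with a vertex removed. -/
lemma graphEnergy_cycle_delete (n : ℕ) (v : Fin (n + 3)) :
    graphEnergy ((cycleGraph (n + 3)).induce {u | u ≠ v}) =
      ∑ u : {u : Fin (n + 3) | u ≠ v},
        |2 * Real.cos (Real.pi * ((u.1 - v : Fin (n + 3)) : ℕ) / ((n + 3 : ℕ) : ℝ))| := by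
  classical
  have hNpos : (0 : ℝ) < ((n + 3 : ℕ) : ℝ) := by positivity
  set t : Fin (n + 3) → ℝ := fun k => Real.pi * ((k - v : Fin (n + 3)) : ℕ) / ((n + 3 : ℕ) : ℝ)
    with ht
  have hpi := Real.pi_pos
  have htle : ∀ k, t k < Real.pi := by
    intro k
    rw [ht]
    simp only
    rw [div_lt_iff₀ hNpos]
    have : (((k - v : Fin (n + 3)) : ℕ) : ℝ) < ((n + 3 : ℕ) : ℝ) := by exact_mod_cast (k - v).2
    nlinarith
  have htnn : ∀ k, 0 ≤ t k := fun k => by rw [ht]; positivity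
  have htpos : ∀ k, k ≠ v → 0 < t k := by
    intro k hk
    have h0 : ((k - v : Fin (n + 3)) : ℕ) ≠ 0 := by
      intro h
      exact hk (sub_eq_zero.mp (Fin.ext h))
    have : (0 : ℝ) < (((k - v : Fin (n + 3)) : ℕ) : ℝ) := by exact_mod_cast Nat.pos_of_ne_zero h0
    rw [ht]; positivity
  -- the extended eigenvector
  set W : Fin (n + 3) → Fin (n + 3) → ℝ :=
    fun k u => Real.sin (((u - v : Fin (n + 3)) : ℕ) * t k) with hW
  have hWv : ∀ k, W k v = 0 := by intro k; simp [hW]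
  have hrec : ∀ k u, u ≠ v → W k (u - 1) + W k (u + 1) = 2 * Real.cos (t k) * W k u := by
    intro k u hu
    have h0 : u - v ≠ 0 := sub_ne_zero.mpr hu
    have e1 : u - 1 - v = (u - v) - 1 := by abel
    have e2 : u + 1 - v = (u - v) + 1 := by abel
    simp only [hW, e1, e2]
    set a := u - v
    have ha0 : (a : ℕ) ≠ 0 := fun h => h0 (Fin.ext h)
    have f1 : (((a - 1 : Fin (n + 3)) : ℕ) : ℝ) = (a : ℕ) - 1 := by
      rw [Fin.coe_sub_one, if_neg h0, Nat.cast_sub (by omega)]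
      simp
    have f2 : Real.sin (((a + 1 : Fin (n + 3)) : ℕ) * t k) = Real.sin (((a : ℕ) + 1) * t k) := by
      by_cases hl : (a : ℕ) + 1 < n + 3
      · have : ((a + 1 : Fin (n + 3)) : ℕ) = (a : ℕ) + 1 := Fin.val_add_one_of_lt' hl
        rw [this]; push_cast; rfl
      · have h3 : (a : ℕ) + 1 = n + 3 := by have := a.2; omega
        have h4 : ((a + 1 : Fin (n + 3)) : ℕ) = 0 := by
          rw [Fin.val_add, Fin.val_one, h3, Nat.mod_self]
        have h5 : ((a : ℕ) : ℝ) + 1 = ((n + 3 : ℕ) : ℝ) := by exact_mod_cast h3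
        rw [h4, h5]
        have h6 : ((n + 3 : ℕ) : ℝ) * t k = (((k - v : Fin (n + 3)) : ℕ) : ℝ) * Real.pi := by
          rw [ht]; field_simp
        rw [h6, Real.sin_nat_mul_pi]
        simp
    rw [f1, f2, sub_mul, add_mul, one_mul, Real.sin_sub, Real.sin_add]
    ring
  change _ = ∑ u : {u : Fin (n + 3) | u ≠ v}, |2 * Real.cos (t u.1)|
  generalize hcd : (fun u : {u : Fin (n + 3) | u ≠ v} => 2 * Real.cos (t u.1)) = c
  have hc : ∀ u : {u : Fin (n + 3) | u ≠ v}, 2 * Real.cos (t u.1) = c u := fun u => by rw [← hcd]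
  simp only [hc]
  generalize hxd : (fun k u : {u : Fin (n + 3) | u ≠ v} => W k.1 u.1) = x
  have hxe : ∀ k u : {u : Fin (n + 3) | u ≠ v}, x k u = W k.1 u.1 := fun k u => by rw [← hxd]
  apply graphEnergy_of_distinct ((cycleGraph (n + 3)).induce {u | u ≠ v}) c ?_ x ?_ ?_
  · intro a b hab
    have h1 : Real.cos (t a.1) = Real.cos (t b.1) := by
      have : 2 * Real.cos (t a.1) = 2 * Real.cos (t b.1) := by rw [hc, hc, hab]
      linarith
    have h2 := Real.injOn_cos ⟨htnn _, (htle _).le⟩ ⟨htnn _, (htle _).le⟩ h1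
    simp only [ht] at h2
    rw [div_left_inj' hNpos.ne', mul_right_inj' hpi.ne', Nat.cast_inj] at h2
    have h3 := Fin.ext h2
    exact Subtype.ext (sub_left_injective h3)
  · intro k h
    have hne : v + 1 ≠ v := by simp
    have h1 := congrFun h ⟨v + 1, hne⟩
    simp only [hxe, hW, add_sub_cancel_left, Fin.val_one, Nat.cast_one, one_mul, Pi.zero_apply] at h1
    exact (Real.sin_pos_of_pos_of_lt_pi (htpos _ k.2) (htle _)).ne' h1
  · intro k
    ext u
    have hfull := sum_cycle_neighbors (W k.1) u.1
    rw [hrec k.1 u.1 u.2] at hfull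
    simp only [Pi.smul_apply, smul_eq_mul]
    rw [← hc, hxe, ← hfull]
    simp only [mulVec, dotProduct, hxe]
    have hs : ∑ w : Fin (n + 3), (cycleGraph (n + 3)).adjMatrix ℝ u.1 w * W k.1 w
        = ∑ w ∈ univ.filter (fun w => w ≠ v), (cycleGraph (n + 3)).adjMatrix ℝ u.1 w * W k.1 w := by
      symm
      apply Finset.sum_subset (Finset.filter_subset _ _)
      intro w _ hw
      have : w = v := by simpa using hw
      rw [this, hWv, mul_zero]
    rw [hs, ← Finset.sum_subtype_of_mem (p := fun w => w ≠ v) (s := univ.filter (fun w => w ≠ v))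
      (fun w => (cycleGraph (n + 3)).adjMatrix ℝ u.1 w * W k.1 w) (by simp)]
    refine Finset.sum_congr ?_ ?_
    · ext w; have hw : w.1 ≠ v := w.2; simpa using hw
    · intro w _
      simp [adjMatrix_apply]

lemma cycle_sum_double (n : ℕ) (hodd : Odd (n + 3)) :
    ∑ j : Fin (n + 3), |2 * Real.cos (2 * Real.pi * (j : ℕ) / ((n + 3 : ℕ) : ℝ))| =
    ∑ j : Fin (n + 3), |2 * Real.cos (Real.pi * (j : ℕ) / ((n + 3 : ℕ) : ℝ))| := by
  obtain ⟨m, hm⟩ := hodd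
  have hinj : Function.Injective (fun j : Fin (n + 3) => j + j) := by
    intro a b hab
    have h := congrArg Fin.val hab
    simp only [Fin.val_add_eq_ite] at h
    have := a.2
    have := b.2
    apply Fin.ext
    split_ifs at h <;> omega
  rw [← Function.Bijective.sum_comp (Finite.injective_iff_bijective.mp hinj)
    (fun j : Fin (n + 3) => |2 * Real.cos (Real.pi * (j : ℕ) / ((n + 3 : ℕ) : ℝ))|)]
  refine Finset.sum_congr rfl fun j _ => ?_
  rw [Fin.val_add_eq_ite]
  split_ifs with h
  · rw [Nat.cast_sub h]
    have hN : ((n + 3 : ℕ) : ℝ) ≠ 0 := by positivity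
    have : Real.pi * ((((j : ℕ) + (j : ℕ) : ℕ) : ℝ) - ((n + 3 : ℕ) : ℝ)) / ((n + 3 : ℕ) : ℝ)
        = 2 * Real.pi * (j : ℕ) / ((n + 3 : ℕ) : ℝ) - Real.pi := by
      rw [Nat.cast_add]
      field_simp
      ring
    rw [this, Real.cos_sub_pi, mul_neg, abs_neg]
  · congr 4
    push_cast
    ring

/-- `K_n` and `C_n` are locally equienergetic for every odd `n ≥ 3`. -/
theorem localEnergy_complete_eq_cycle (n : ℕ) (hn : 3 ≤ n) (hodd : Odd n) :
    localEnergy (⊤ : SimpleGraph (Fin n)) = localEnergy (cycleGraph n) := by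
  obtain ⟨n, rfl⟩ := Nat.exists_eq_add_of_le' hn
  unfold localEnergy
  refine Finset.sum_congr rfl fun v _ => ?_
  unfold localEnergyAt
  have hcard : Fintype.card {u : Fin (n + 3) | u ≠ v} = n + 2 := by
    have : Fintype.card {u : Fin (n + 3) // u ≠ v} = n + 2 := by
      simp [Fintype.card_subtype_compl]
    rw [← this]
    exact Fintype.card_congr (Equiv.refl _)
  have htop : (⊤ : SimpleGraph (Fin (n + 3))).induce {u | u ≠ v} = ⊤ := by
    ext a b
    simp [Subtype.ext_iff]
  rw [htop, graphEnergy_top (by simp), graphEnergy_top (by rw [hcard]; omega), hcard,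
    graphEnergy_cycle, cycle_sum_double n hodd, graphEnergy_cycle_delete]
  set g : Fin (n + 3) → ℝ := fun j => |2 * Real.cos (Real.pi * (j : ℕ) / ((n + 3 : ℕ) : ℝ))|
    with hg
  have h1 : ∑ j, g j = ∑ u, g (u - v) := (Equiv.sum_comp (Equiv.subRight v) g).symm
  have h2 : ∑ u, g (u - v) = g (v - v) + ∑ u : {u : Fin (n + 3) | u ≠ v}, g (u.1 - v) := by
    rw [← Finset.add_sum_erase _ _ (mem_univ v)]
    congr 1
    exact Finset.sum_subtype _ (by simp) _
  have h3 : g (v - v) = 2 := by simp [hg]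
  change _ = ∑ j, g j - ∑ u : {u : Fin (n + 3) | u ≠ v}, g (u.1 - v)
  rw [h1, h2, h3]
  simp only [Fintype.card_fin]
  push_cast
  ring
end

section
/- The graphs K₅, K₃ ∪ K₂, and C₅ are pairwise locally equienergetic: e(K₅) = e(K₃ ∪ K₂) = e(C₅). -/
open SimpleGraph Matrix Finset

/-- Energy from a matrix model of the adjacency relation and a factored characteristic polynomial. -/
lemma energy_of_model {V : Type*} [Fintype V] [DecidableEq V] (G : SimpleGraph V) {n : ℕ}
    (f : Fin n → V) (hf : Function.Bijective f) (B : Matrix (Fin n) (Fin n) ℕ)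
    (hB : ∀ i j, (G.Adj (f i) (f j) ∧ Nat.beq (B i j) 1 = true) ∨ (¬ G.Adj (f i) (f j) ∧ Nat.beq (B i j) 0 = true))
    (s : Multiset ℝ)
    (hs : ∀ x : ℝ, (Matrix.scalar (Fin n) x - B.map (Nat.cast : ℕ → ℝ)).det
      = (s.map (fun a => x - a)).prod) :
    graphEnergy G = (s.map (fun a => |a|)).sum := by
  classical
  unfold graphEnergy
  let := Classical.decRel G.Adj
  have hH := adjMatrix_isHermitian G
  have h1 : (G.adjMatrix ℝ).charpoly = (s.map (fun a => Polynomial.X - Polynomial.C a)).prod := by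
    rw [← Matrix.charpoly_reindex (Equiv.ofBijective f hf).symm]
    have : Matrix.reindex (Equiv.ofBijective f hf).symm (Equiv.ofBijective f hf).symm
        (G.adjMatrix ℝ) = B.map (Nat.cast : ℕ → ℝ) := by
      ext i j
      rcases hB i j with ⟨h, h'⟩ | ⟨h, h'⟩ <;> simp [SimpleGraph.adjMatrix_apply, h, Nat.eq_of_beq_eq_true h']
    rw [this]
    apply Polynomial.funext
    intro x
    rw [Matrix.eval_charpoly, hs, Polynomial.eval_multiset_prod, Multiset.map_map]
    simp
  have h2 := hH.roots_charpoly_eq_eigenvalues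
  rw [h1, Polynomial.roots_multiset_prod_X_sub_C] at h2
  rw [h2, Multiset.map_map]
  rfl

/-- The same for a vertex-deleted subgraph. -/
lemma energy_del_of_model {V : Type*} [Fintype V] [DecidableEq V] (G : SimpleGraph V) (v : V)
    {n : ℕ} (f : Fin n → V) (hf : Function.Injective f) (hf' : ∀ u, u ≠ v ↔ ∃ i, f i = u)
    (B : Matrix (Fin n) (Fin n) ℕ)
    (hB : ∀ i j, (G.Adj (f i) (f j) ∧ Nat.beq (B i j) 1 = true) ∨ (¬ G.Adj (f i) (f j) ∧ Nat.beq (B i j) 0 = true))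
    (s : Multiset ℝ)
    (hs : ∀ x : ℝ, (Matrix.scalar (Fin n) x - B.map (Nat.cast : ℕ → ℝ)).det
      = (s.map (fun a => x - a)).prod) :
    graphEnergy (G.induce {u | u ≠ v}) = (s.map (fun a => |a|)).sum := by
  refine energy_of_model _ (fun i => ⟨f i, (hf' _).2 ⟨i, rfl⟩⟩) ⟨?_, ?_⟩ B ?_ s hs
  · intro i j h
    exact hf (congrArg Subtype.val h)
  · rintro ⟨u, hu⟩
    obtain ⟨i, hi⟩ := (hf' u).1 hu
    exact ⟨i, Subtype.ext hi⟩
  · intro i j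
    simpa using hB i j

lemma det_K5 (x : ℝ) : (Matrix.scalar (Fin 5) x - (!![0,1,1,1,1;1,0,1,1,1;1,1,0,1,1;1,1,1,0,1;
    1,1,1,1,0] : Matrix (Fin 5) (Fin 5) ℕ).map (Nat.cast : ℕ → ℝ)).det
      = (({4,-1,-1,-1,-1} : Multiset ℝ).map (fun a => x - a)).prod := by
  simp [Matrix.det_succ_row_zero, Fin.sum_univ_succ, Fin.succAbove, Matrix.diagonal]
  ring

lemma det_K4 (x : ℝ) : (Matrix.scalar (Fin 4) x - (!![0,1,1,1;1,0,1,1;1,1,0,1;1,1,1,0] :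
    Matrix (Fin 4) (Fin 4) ℕ).map (Nat.cast : ℕ → ℝ)).det
      = (({3,-1,-1,-1} : Multiset ℝ).map (fun a => x - a)).prod := by
  simp [Matrix.det_succ_row_zero, Fin.sum_univ_succ, Fin.succAbove, Matrix.diagonal]
  ring

lemma det_K3K2 (x : ℝ) : (Matrix.scalar (Fin 5) x - (!![0,1,1,0,0;1,0,1,0,0;1,1,0,0,0;0,0,0,0,1;
    0,0,0,1,0] : Matrix (Fin 5) (Fin 5) ℕ).map (Nat.cast : ℕ → ℝ)).det
      = (({2,-1,-1,1,-1} : Multiset ℝ).map (fun a => x - a)).prod := by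
  simp [Matrix.det_succ_row_zero, Fin.sum_univ_succ, Fin.succAbove, Matrix.diagonal]
  ring

lemma det_K2K2 (x : ℝ) : (Matrix.scalar (Fin 4) x - (!![0,1,0,0;1,0,0,0;0,0,0,1;0,0,1,0] :
    Matrix (Fin 4) (Fin 4) ℕ).map (Nat.cast : ℕ → ℝ)).det
      = (({1,-1,1,-1} : Multiset ℝ).map (fun a => x - a)).prod := by
  simp [Matrix.det_succ_row_zero, Fin.sum_univ_succ, Fin.succAbove, Matrix.diagonal]
  ring

lemma det_K3K1 (x : ℝ) : (Matrix.scalar (Fin 4) x - (!![0,1,1,0;1,0,1,0;1,1,0,0;0,0,0,0] :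
    Matrix (Fin 4) (Fin 4) ℕ).map (Nat.cast : ℕ → ℝ)).det
      = (({2,-1,-1,0} : Multiset ℝ).map (fun a => x - a)).prod := by
  simp [Matrix.det_succ_row_zero, Fin.sum_univ_succ, Fin.succAbove, Matrix.diagonal]
  ring

lemma det_C5 (x : ℝ) : (Matrix.scalar (Fin 5) x - (!![0,1,0,0,1;1,0,1,0,0;0,1,0,1,0;0,0,1,0,1;
    1,0,0,1,0] : Matrix (Fin 5) (Fin 5) ℕ).map (Nat.cast : ℕ → ℝ)).det
      = (({2,(√5-1)/2,(√5-1)/2,-((√5+1)/2),-((√5+1)/2)} : Multiset ℝ).map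
        (fun a => x - a)).prod := by
  have h5 : √5 ^ 2 = (5 : ℝ) := Real.sq_sqrt (by norm_num)
  have hq : (x - (√5-1)/2) * (x + (√5+1)/2) = x^2 + x - 1 := by linear_combination (-1/4) * h5
  have hR : (({2,(√5-1)/2,(√5-1)/2,-((√5+1)/2),-((√5+1)/2)} : Multiset ℝ).map
        (fun a => x - a)).prod = (x - 2) * (x^2 + x - 1)^2 := by
    rw [← hq]
    simp only [Multiset.insert_eq_cons, Multiset.map_cons, Multiset.map_singleton,
      Multiset.prod_cons, Multiset.prod_singleton]
    ring
  rw [hR]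
  simp [Matrix.det_succ_row_zero, Fin.sum_univ_succ, Fin.succAbove, Matrix.diagonal]
  ring

lemma det_P4 (x : ℝ) : (Matrix.scalar (Fin 4) x - (!![0,1,0,0;1,0,1,0;0,1,0,1;0,0,1,0] :
    Matrix (Fin 4) (Fin 4) ℕ).map (Nat.cast : ℕ → ℝ)).det
      = (({(√5-1)/2,-((√5-1)/2),(√5+1)/2,-((√5+1)/2)} : Multiset ℝ).map
        (fun a => x - a)).prod := by
  have h5 : √5 ^ 2 = (5 : ℝ) := Real.sq_sqrt (by norm_num)
  have hq : (x - (√5-1)/2) * (x + (√5+1)/2) = x^2 + x - 1 := by linear_combination (-1/4) * h5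
  have hq' : (x + (√5-1)/2) * (x - (√5+1)/2) = x^2 - x - 1 := by linear_combination (-1/4) * h5
  have hR : (({(√5-1)/2,-((√5-1)/2),(√5+1)/2,-((√5+1)/2)} : Multiset ℝ).map
        (fun a => x - a)).prod = (x^2 + x - 1) * (x^2 - x - 1) := by
    rw [← hq, ← hq']
    simp
    ring
  rw [hR]
  simp [Matrix.det_succ_row_zero, Fin.sum_univ_succ, Fin.succAbove, Matrix.diagonal]
  ring

lemma local_K5 : localEnergy (⊤ : SimpleGraph (Fin 5)) = 10 := by
  have h : graphEnergy (⊤ : SimpleGraph (Fin 5)) = 8 := by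
    rw [energy_of_model _ id Function.bijective_id _ (by decide) _ det_K5]
    norm_num
  have h' : ∀ v, graphEnergy ((⊤ : SimpleGraph (Fin 5)).induce {u | u ≠ v}) = 6 := by
    intro v
    rw [energy_del_of_model _ v v.succAbove Fin.succAbove_right_injective
      (by revert v; decide) _ (by revert v; decide) _ det_K4]
    norm_num
  simp only [localEnergy, localEnergyAt, h, h']
  norm_num

lemma local_C5 : localEnergy (cycleGraph 5) = 10 := by
  have h1 : (1 : ℝ) ≤ √5 := Real.one_le_sqrt.2 (by norm_num)
  have e1 : |(√5-1)/2| = (√5-1)/2 := abs_of_nonneg (by linarith)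
  have e2 : |(√5+1)/2| = (√5+1)/2 := abs_of_nonneg (by linarith)
  have h : graphEnergy (cycleGraph 5) = 2 + 2 * √5 := by
    rw [energy_of_model _ id Function.bijective_id _ (by decide) _ det_C5]
    simp only [Multiset.insert_eq_cons, Multiset.map_cons, Multiset.map_singleton,
      Multiset.sum_cons, Multiset.sum_singleton, abs_neg, e1, e2]
    norm_num
    ring
  have h' : ∀ v, graphEnergy ((cycleGraph 5).induce {u | u ≠ v}) = 2 * √5 := by
    intro v
    rw [energy_del_of_model _ v (fun i : Fin 4 => v + i.succ) (by revert v; decide)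
      (by revert v; decide) _ (by revert v; decide) _ det_P4]
    simp only [Multiset.insert_eq_cons, Multiset.map_cons, Multiset.map_singleton,
      Multiset.sum_cons, Multiset.sum_singleton, abs_neg, e1, e2]
    ring
  simp only [localEnergy, localEnergyAt, h, h']
  norm_num

lemma local_K3K2 :
    localEnergy ((⊤ : SimpleGraph (Fin 3)) ⊕g (⊤ : SimpleGraph (Fin 2))) = 10 := by
  let : DecidableRel ((⊤ : SimpleGraph (Fin 3)) ⊕g (⊤ : SimpleGraph (Fin 2))).Adj :=
    fun a b => match a, b with
      | .inl u, .inl v => inferInstanceAs (Decidable ((⊤ : SimpleGraph (Fin 3)).Adj u v))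
      | .inr u, .inr v => inferInstanceAs (Decidable ((⊤ : SimpleGraph (Fin 2)).Adj u v))
      | .inl _, .inr _ => inferInstanceAs (Decidable (false = true))
      | .inr _, .inl _ => inferInstanceAs (Decidable (false = true))
  have h : graphEnergy ((⊤ : SimpleGraph (Fin 3)) ⊕g (⊤ : SimpleGraph (Fin 2))) = 6 := by
    rw [energy_of_model _ (![.inl 0, .inl 1, .inl 2, .inr 0, .inr 1] : Fin 5 → Fin 3 ⊕ Fin 2)
      (by decide) _ (by decide) _ det_K3K2]
    norm_num
  have hl : ∀ v : Fin 3, graphEnergy (((⊤ : SimpleGraph (Fin 3)) ⊕g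
      (⊤ : SimpleGraph (Fin 2))).induce {u | u ≠ Sum.inl v}) = 4 := by
    intro v
    rw [energy_del_of_model _ _
      (![.inl (v + 1), .inl (v + 2), .inr 0, .inr 1] : Fin 4 → Fin 3 ⊕ Fin 2)
      (by revert v; decide) (by revert v; decide) _ (by revert v; decide) _ det_K2K2]
    norm_num
  have hr : ∀ v : Fin 2, graphEnergy (((⊤ : SimpleGraph (Fin 3)) ⊕g
      (⊤ : SimpleGraph (Fin 2))).induce {u | u ≠ Sum.inr v}) = 4 := by
    intro v
    rw [energy_del_of_model _ _
      (![.inl 0, .inl 1, .inl 2, .inr (v + 1)] : Fin 4 → Fin 3 ⊕ Fin 2)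
      (by revert v; decide) (by revert v; decide) _ (by revert v; decide) _ det_K3K1]
    norm_num
  simp only [localEnergy, localEnergyAt, h, Fintype.sum_sum_type, hl, hr]
  norm_num

/-- `e(K₅) = e(K₃ ∪ K₂) = e(C₅)`. -/
theorem localEnergy_K5_eq :
    localEnergy (⊤ : SimpleGraph (Fin 5)) =
      localEnergy ((⊤ : SimpleGraph (Fin 3)) ⊕g (⊤ : SimpleGraph (Fin 2))) ∧
    localEnergy ((⊤ : SimpleGraph (Fin 3)) ⊕g (⊤ : SimpleGraph (Fin 2))) =
      localEnergy (cycleGraph 5) := by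
  rw [local_K5, local_K3K2, local_C5]
  exact ⟨rfl, rfl⟩
end
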